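/- Let 𝔽_q be a finite field of characteristic p, and let A = P₁^{h₁} ⋯ P_r^{h_r} Q₁^{k₁} ⋯ Q_s^{k_s} be a nonconstant unitary perfect polynomial over 𝔽_q, where P₁, …, P_r, Q₁, …, Q_s are pairwise distinct monic irreducible polynomials, the exponents h_i, k_j are positive, h₁·deg(P₁) = h₂·deg(P₂) = ⋯ = h_r·deg(P_r), and h₁·deg(P₁) < k_j·deg(Q_j) for every j. Then r ≡ 0 (mod p). -/

import Mathlib

/-!
The unitary divisors of `A = ∏ R_i ^ e_i` (distinct monic irreducible `R_i`, positive `e_i`) are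
exactly the products `∏_{i ∈ S} R_i ^ e_i` over subsets `S` of the index set, one for each `S`
(`unitaryDivisors_eq`), so `σ*(A)` is the sum of these products (`sigmaStar_prod`). If
`σ*(A) = A`, cancelling the term of the full set shows that the sum over proper subsets vanishes.
Let `m` be the least of the degrees of the `R_i ^ e_i` and compare coefficients in degree
`deg A - m`. The complement of a proper subset `S` contributes total degree more than `m` unless it
is a single index of degree exactly `m`; hence the coefficient counts the indices of degree `m`,
and that count is zero in `F`.
-/

open Polynomial
open scoped Classical

/-- The sum of all unitary divisors of `A`: monic divisors `d` of `A` with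
`gcd(d, A/d) = 1`. -/
noncomputable def sigmaStar {F : Type*} [Field F] (A : Polynomial F) : Polynomial F :=
  ∑ᶠ d ∈ {d : Polynomial F | d.Monic ∧ d ∣ A ∧ IsCoprime d (A / d)}, d

/-- `A` is unitary perfect if `σ*(A) = A`. -/
def UnitaryPerfect {F : Type*} [Field F] (A : Polynomial F) : Prop :=
  sigmaStar A = A

section
variable {F : Type*} [Field F] {ι : Type*}

lemma isCoprime_of_ne {R : ι → Polynomial F} (hR : ∀ i, (R i).Monic ∧ Irreducible (R i))
    (hinj : Function.Injective R) {i j : ι} (hij : i ≠ j) : IsCoprime (R i) (R j) := by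
  rw [(hR i).2.coprime_iff_not_dvd]
  intro hd
  exact hij (hinj (eq_of_monic_of_associated (hR i).1 (hR j).1
    ((hR i).2.associated_of_dvd (hR j).2 hd)))

lemma dvd_prod_iff_mem {R : ι → Polynomial F} {e : ι → ℕ}
    (hR : ∀ i, (R i).Monic ∧ Irreducible (R i)) (hinj : Function.Injective R)
    (he : ∀ i, 0 < e i) (S : Finset ι) (i : ι) :
    R i ∣ ∏ j ∈ S, R j ^ e j ↔ i ∈ S := by
  constructor
  · intro hd
    by_contra hi
    have hc : IsCoprime (R i) (∏ j ∈ S, R j ^ e j) :=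
      IsCoprime.prod_right fun j hj =>
        (isCoprime_of_ne hR hinj (fun hij => hi (by rwa [hij]))).pow_right
    exact ((hR i).2.coprime_iff_not_dvd.1 hc) hd
  · intro hi
    exact (dvd_pow_self _ (he i).ne').trans (Finset.dvd_prod_of_mem _ hi)

variable [Fintype ι]

/-- A unitary divisor `d` is the product of the full prime powers `R i ^ e i` over those `i` with
`R i ∣ d`. -/
lemma unitaryDivisors_eq {R : ι → Polynomial F} {e : ι → ℕ}
    (hR : ∀ i, (R i).Monic ∧ Irreducible (R i)) (hinj : Function.Injective R) :
    {d : Polynomial F | d.Monic ∧ d ∣ (∏ i, R i ^ e i) ∧ IsCoprime d ((∏ i, R i ^ e i) / d)} =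
      Set.range fun S : Finset ι => ∏ i ∈ S, R i ^ e i := by
  have hmon : ∀ S : Finset ι, (∏ i ∈ S, R i ^ e i).Monic := fun S =>
    monic_prod_of_monic _ _ fun i _ => (hR i).1.pow _
  ext d
  constructor
  · rintro ⟨hd, ⟨c, hc⟩, hcop⟩
    rw [hc, mul_div_cancel_left₀ _ hd.ne_zero] at hcop
    refine ⟨Finset.univ.filter fun i => R i ∣ d, ?_⟩
    refine eq_of_monic_of_associated (hmon _) hd (associated_of_dvd_dvd ?_ ?_)
    · refine Finset.prod_dvd_of_coprime
        (fun i _ j _ hij => (isCoprime_of_ne hR hinj hij).pow) fun i hi => ?_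
      have hid : R i ∣ d := (Finset.mem_filter.1 hi).2
      have hic : IsCoprime (R i ^ e i) c := (hcop.of_isCoprime_of_dvd_left hid).pow_left
      exact hic.dvd_of_dvd_mul_right (hc ▸ Finset.dvd_prod_of_mem _ (Finset.mem_univ i))
    · have hcop' : IsCoprime d (∏ i ∈ Finset.univ.filter (fun i => ¬ R i ∣ d), R i ^ e i) :=
        IsCoprime.prod_right fun i hi =>
          (((hR i).2.coprime_iff_not_dvd.2 (Finset.mem_filter.1 hi).2).symm).pow_right
      refine hcop'.dvd_of_dvd_mul_right ?_
      rw [Finset.prod_filter_mul_prod_filter_not, hc]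
      exact dvd_mul_right _ _
  · rintro ⟨S, rfl⟩
    have hS := Finset.prod_mul_prod_compl S fun i => R i ^ e i
    refine ⟨hmon S, ⟨_, hS.symm⟩, ?_⟩
    rw [← hS]
    dsimp only
    rw [mul_div_cancel_left₀ _ (hmon S).ne_zero]
    refine IsCoprime.prod_left fun i hi => IsCoprime.prod_right fun j hj => ?_
    refine (isCoprime_of_ne hR hinj ?_).pow
    rintro rfl
    exact Finset.mem_compl.1 hj hi

lemma sigmaStar_prod {R : ι → Polynomial F} {e : ι → ℕ}
    (hR : ∀ i, (R i).Monic ∧ Irreducible (R i)) (hinj : Function.Injective R)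
    (he : ∀ i, 0 < e i) :
    sigmaStar (∏ i, R i ^ e i) = ∑ S : Finset ι, ∏ i ∈ S, R i ^ e i := by
  have hSinj : Function.Injective fun S : Finset ι => ∏ i ∈ S, R i ^ e i := by
    intro S T hST
    ext i
    rw [← dvd_prod_iff_mem hR hinj he S i, ← dvd_prod_iff_mem hR hinj he T i]
    exact iff_of_eq (congrArg (R i ∣ ·) hST)
  rw [sigmaStar, unitaryDivisors_eq hR hinj, finsum_mem_range hSinj, finsum_eq_sum_of_fintype]

/-- For monic `B i` of degree at least `m > 0`, the coefficient in degree `deg (∏ B i) - m` of the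
product over a proper subset `Tᶜ` is `1` if `T` is a single index of degree `m`, and `0`
otherwise. -/
lemma coeff_prod_compl {B : ι → Polynomial F} (hB : ∀ i, (B i).Monic) {m : ℕ} (hm : 0 < m)
    (hle : ∀ i, m ≤ (B i).natDegree) {T : Finset ι} (hT : T.Nonempty) :
    (∏ i ∈ Tᶜ, B i).coeff ((∏ i, B i).natDegree - m) =
      if ∃ i, (B i).natDegree = m ∧ T = {i} then 1 else 0 := by
  have hmon : ∀ S : Finset ι, (∏ i ∈ S, B i).Monic := fun S =>
    monic_prod_of_monic _ _ fun i _ => hB i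
  have hdeg : (∏ i, B i).natDegree = ∑ i ∈ T, (B i).natDegree + (∏ i ∈ Tᶜ, B i).natDegree := by
    rw [← Finset.prod_mul_prod_compl T B, (hmon T).natDegree_mul (hmon _),
      natDegree_prod_of_monic _ _ fun i _ => hB i]
  split_ifs with hex
  · obtain ⟨i, hi, rfl⟩ := hex
    rw [Finset.sum_singleton, hi] at hdeg
    rw [hdeg, Nat.add_sub_cancel_left]
    exact hmon _
  · apply coeff_eq_zero_of_natDegree_lt
    obtain ⟨i, hi⟩ := hT
    have hsum := Finset.add_sum_erase T (fun i => (B i).natDegree) hi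
    have hlt : m < ∑ i ∈ T, (B i).natDegree := by
      rw [← hsum]
      rcases (T.erase i).eq_empty_or_nonempty with h0 | ⟨j, hj⟩
      · have hTi : T = {i} := by rw [← Finset.insert_erase hi, h0, insert_empty_eq]
        have hne : (B i).natDegree ≠ m := fun h => hex ⟨i, h, hTi⟩
        have := hle i
        omega
      · have h1 := Finset.single_le_sum (f := fun i => (B i).natDegree)
          (fun _ _ => Nat.zero_le _) hj
        have := hle i
        have := hle j
        omega
    omega

/-- In a unitary perfect polynomial, the number of prime powers of minimal degree `m` vanishes in
`F`. -/
lemma card_min_degree_eq_zero {R : ι → Polynomial F} {e : ι → ℕ}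
    (hR : ∀ i, (R i).Monic ∧ Irreducible (R i)) (hinj : Function.Injective R)
    (he : ∀ i, 0 < e i) {m : ℕ} (hm : 0 < m) (hle : ∀ i, m ≤ (R i ^ e i).natDegree)
    (hperf : UnitaryPerfect (∏ i, R i ^ e i)) :
    (((Finset.univ.filter fun i => (R i ^ e i).natDegree = m).card : ℕ) : F) = 0 := by
  rw [UnitaryPerfect, sigmaStar_prod hR hinj he,
    ← (Equiv.sum_comp (compl_involutive.toPerm (compl : Finset ι → Finset ι)) fun S => ∏ i ∈ S, R i ^ e i),
    ← Finset.add_sum_erase _ _ (Finset.mem_univ (∅ : Finset ι))] at hperf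
  simp only [Function.Involutive.coe_toPerm, Finset.compl_empty, add_eq_left] at hperf
  have hcoeff := congrArg (fun f => f.coeff ((∏ i, R i ^ e i).natDegree - m)) hperf
  simp only [finsetSum_coeff, coeff_zero] at hcoeff
  rw [Finset.sum_congr rfl fun T hT => coeff_prod_compl (fun i => (hR i).1.pow (e i)) hm hle
    (Finset.nonempty_iff_ne_empty.2 (Finset.ne_of_mem_erase hT)), Finset.sum_boole] at hcoeff
  rw [← hcoeff, ← Finset.card_image_of_injective _ (Finset.singleton_injective (α := ι))]
  congr 2
  ext T
  simp only [Finset.mem_image, Finset.mem_filter, Finset.mem_univ, true_and, Finset.mem_erase,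
    and_true]
  constructor
  · rintro ⟨i, hi, rfl⟩
    exact ⟨Finset.singleton_ne_empty i, i, hi, rfl⟩
  · rintro ⟨-, i, hi, rfl⟩
    exact ⟨i, hi, rfl⟩

end

theorem stmt4 {F : Type*} [Field F] [Fintype F] (p : ℕ) [Fact p.Prime] [CharP F p]
    (r s : ℕ) (hr : 0 < r)
    (P : Fin r → Polynomial F) (Q : Fin s → Polynomial F)
    (h : Fin r → ℕ) (k : Fin s → ℕ)
    (hP : ∀ i, (P i).Monic ∧ Irreducible (P i))
    (hQ : ∀ j, (Q j).Monic ∧ Irreducible (Q j))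
    (hPinj : Function.Injective P) (hQinj : Function.Injective Q)
    (hPQ : ∀ i j, P i ≠ Q j)
    (hh : ∀ i, 0 < h i) (hk : ∀ j, 0 < k j)
    (A : Polynomial F)
    (hA : A = (∏ i, P i ^ h i) * ∏ j, Q j ^ k j)
    (hAnc : A.natDegree ≠ 0)
    (heq : ∀ i, h i * (P i).natDegree = h ⟨0, hr⟩ * (P ⟨0, hr⟩).natDegree)
    (hlt : ∀ j, h ⟨0, hr⟩ * (P ⟨0, hr⟩).natDegree < k j * (Q j).natDegree)
    (hperf : UnitaryPerfect A) :
    r ≡ 0 [MOD p] := by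
  have hR : ∀ i, (Sum.elim P Q i).Monic ∧ Irreducible (Sum.elim P Q i) := by
    rintro (i | j)
    exacts [hP i, hQ j]
  have he : ∀ i, 0 < Sum.elim h k i := by
    rintro (i | j)
    exacts [hh i, hk j]
  have hinj : Function.Injective (Sum.elim P Q) := hPinj.sumElim hQinj hPQ
  have hm : 0 < h ⟨0, hr⟩ * (P ⟨0, hr⟩).natDegree :=
    Nat.mul_pos (hh _) (hP _).2.natDegree_pos
  have hdegP : ∀ i, (P i ^ h i).natDegree = h ⟨0, hr⟩ * (P ⟨0, hr⟩).natDegree := fun i => by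
    rw [natDegree_pow, heq]
  have hdegQ : ∀ j, h ⟨0, hr⟩ * (P ⟨0, hr⟩).natDegree < (Q j ^ k j).natDegree := fun j => by
    rw [natDegree_pow]
    exact hlt j
  have hle : ∀ i, h ⟨0, hr⟩ * (P ⟨0, hr⟩).natDegree ≤
      (Sum.elim P Q i ^ Sum.elim h k i).natDegree := by
    rintro (i | j)
    exacts [(hdegP i).ge, (hdegQ j).le]
  have hprod : A = ∏ i, Sum.elim P Q i ^ Sum.elim h k i := by
    rw [hA, Fintype.prod_sum_type]
    rfl
  have key := card_min_degree_eq_zero hR hinj he hm hle (hprod ▸ hperf)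
  have hcard : (Finset.univ.filter fun i => (Sum.elim P Q i ^ Sum.elim h k i).natDegree =
      h ⟨0, hr⟩ * (P ⟨0, hr⟩).natDegree).card = r := by
    refine Eq.trans ?_ ((Finset.card_image_of_injective Finset.univ
      (Sum.inl_injective (α := Fin r) (β := Fin s))).trans (Finset.card_fin r))
    congr 1
    ext (i | j)
    · simp [heq i]
    · simpa using (hlt j).ne'
  rw [hcard] at key
  exact Nat.modEq_zero_iff_dvd.2 ((CharP.cast_eq_zero_iff F p r).1 key)
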